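/- Let β > 1 be a real number and suppose that Σ_{j≥1} λ_j β^{−j} = 1 and that lim_{n→∞} υ_{n+2}/υ_n = β². Then for every k ≥ 1, lim_{n→∞} #{ω ∈ Υ_n : s(ω) = k} / υ_n = λ_k β^{−k}; that is, under the uniform measure μ_n on Υ_n, the probability that the least renewal time equals k converges to λ_k β^{−k} as n → ∞. -/

import Mathlib

/-- An `n`-step self-avoiding walk in `ℤ^d`, given by its `n+1` vertices:
consecutive vertices are nearest neighbors, and all vertices are distinct. -/
def IsSAW (d n : ℕ) (ω : Fin (n + 1) → Fin d → ℤ) : Prop :=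
  (∀ i : Fin n, (∑ k : Fin d, |ω i.succ k - ω i.castSucc k|) = 1) ∧ Function.Injective ω

/-- The projection `π₁` onto the first coordinate. -/
def pi1 {d : ℕ} (x : Fin d → ℤ) : ℤ := if h : 0 < d then x ⟨0, h⟩ else 0

/-- `Υ_n`: the set of `n`-step self-avoiding walks in `ℤ^d` starting at `0` with
`π₁ ω_j > 0` for `1 ≤ j ≤ n`. -/
def Upsilon (d n : ℕ) : Set (Fin (n + 1) → Fin d → ℤ) :=
  {ω | IsSAW d n ω ∧ ω 0 = 0 ∧ ∀ j : Fin (n + 1), 1 ≤ j.val → 0 < pi1 (ω j)}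

/-- `υ_n`, the number of walks in `Υ_n`. -/
noncomputable def upsilonCount (d n : ℕ) : ℕ := Set.ncard (Upsilon d n)

/-- `j` is a renewal time of the `n`-step walk `ω`: `1 ≤ j ≤ n-1` and
`π₁ ω_k ≤ π₁ ω_j < π₁ ω_m` whenever `0 ≤ k ≤ j < m ≤ n`. -/
def HasRenewalAt {d n : ℕ} (ω : Fin (n + 1) → Fin d → ℤ) (j : ℕ) : Prop :=
  1 ≤ j ∧ ∃ hj : j < n, ∀ k m : Fin (n + 1), k.val ≤ j → j < m.val →
    pi1 (ω k) ≤ pi1 (ω ⟨j, Nat.lt_succ_of_lt hj⟩) ∧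
      pi1 (ω ⟨j, Nat.lt_succ_of_lt hj⟩) < pi1 (ω m)

/-- `s(ω) = k`: `k` is the least renewal time of `ω`. -/
def LeastRenewal {d n : ℕ} (ω : Fin (n + 1) → Fin d → ℤ) (k : ℕ) : Prop :=
  HasRenewalAt ω k ∧ ∀ j < k, ¬ HasRenewalAt ω j

/-- A bridge: a walk in `Υ_n` with `π₁ ω_j ≤ π₁ ω_n` for all `0 ≤ j ≤ n`. -/
def IsBridge (d n : ℕ) (ω : Fin (n + 1) → Fin d → ℤ) : Prop :=
  ω ∈ Upsilon d n ∧ ∀ j : Fin (n + 1), pi1 (ω j) ≤ pi1 (ω (Fin.last n))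

/-- An irreducible bridge: a bridge with no renewal time. -/
def IsIrrBridge (d n : ℕ) (ω : Fin (n + 1) → Fin d → ℤ) : Prop :=
  IsBridge d n ω ∧ ∀ j : ℕ, ¬ HasRenewalAt ω j

/-- `λ_k`, the number of `k`-step irreducible bridges. -/
noncomputable def lambdaCount (d k : ℕ) : ℕ :=
  Set.ncard {ω : Fin (k + 1) → Fin d → ℤ | IsIrrBridge d k ω}

open Filter Topology Finset in
/-- A positive sequence with `a (n - 2) / a n → 1` that dominates its convolution with an aperiodic
probability sequence satisfies `a (n - k) / a n → 1` for every `k`. -/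
theorem tendsto_sub_div_of_renewal_le {a p : ℕ → ℝ} (ha : ∀ᶠ n in atTop, 0 < a n)
    (h2 : Tendsto (fun n => a (n - 2) / a n) atTop (𝓝 1))
    (hp : ∀ j, 0 ≤ p j) (hp0 : 0 < p 0) (hsum : HasSum p 1)
    (hle : ∀ J, ∀ᶠ n in atTop, ∑ j ∈ range J, p j * a (n - (j + 1)) ≤ a n) (k : ℕ) :
    Tendsto (fun n => a (n - k) / a n) atTop (𝓝 1) := by
  have hcomp : ∀ c k : ℕ, Tendsto (fun n => a (n - c) / a n) atTop (𝓝 1) →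
      Tendsto (fun n => a (n - k) / a n) atTop (𝓝 1) →
      Tendsto (fun n => a (n - (k + c)) / a n) atTop (𝓝 1) := by
    intro c k hc hk
    have h := (hk.comp (tendsto_sub_atTop_nat c)).mul hc
    rw [one_mul] at h
    refine h.congr' ?_
    filter_upwards [(tendsto_sub_atTop_nat c).eventually ha] with n hn
    simp only [Function.comp_apply, Nat.sub_sub, add_comm c k]
    rw [div_mul_div_cancel₀ hn.ne']
  have h0 : Tendsto (fun n => a (n - 0) / a n) atTop (𝓝 1) := by
    refine tendsto_const_nhds.congr' ?_
    filter_upwards [ha] with n hn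
    simp [hn.ne']
  have heven : ∀ i, Tendsto (fun n => a (n - 2 * i) / a n) atTop (𝓝 1) := by
    intro i
    induction i with
    | zero => exact h0
    | succ i ih => exact hcomp 2 (2 * i) h2 ih
  have hupper : ∀ c : ℝ, 1 < c → ∀ᶠ n in atTop, a (n - 1) / a n < c := by
    intro c hc
    have hsplit : ∀ K, ∑ j ∈ range (2 * K), p j
        = ∑ i ∈ range K, p (2 * i + 1) + ∑ i ∈ range K, p (2 * i) := by
      intro K
      induction K with
      | zero => simp
      | succ K ih =>
        rw [mul_add, mul_one, sum_range_succ, sum_range_succ, ih, sum_range_succ, sum_range_succ]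
        ring
    have hlim : Tendsto (fun K => ∑ j ∈ range (2 * K), p j) atTop (𝓝 1) :=
      hsum.tendsto_sum_nat.comp (tendsto_id.const_mul_atTop' two_pos)
    obtain ⟨K, hK, hK1⟩ := ((hlim.eventually_const_lt
      (show 1 - (c - 1) * p 0 < 1 by nlinarith)).and (eventually_ge_atTop 1)).exists
    rw [hsplit] at hK
    have hO : p 0 ≤ ∑ i ∈ range K, p (2 * i) :=
      single_le_sum (f := fun i => p (2 * i)) (fun i _ => hp _) (mem_range.2 hK1)
    set E := ∑ i ∈ range K, p (2 * i + 1) with hE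
    set O := ∑ i ∈ range K, p (2 * i) with hOdef
    have hOpos : 0 < O := hp0.trans_le hO
    have hlt : (1 - E) / O < c := by
      rw [div_lt_iff₀ hOpos]
      nlinarith
    have tE : Tendsto (fun n => ∑ i ∈ range K, p (2 * i + 1) * (a (n - 2 * (i + 1)) / a n))
        atTop (𝓝 E) := by
      simpa using tendsto_finsetSum (range K) fun i _ => (heven (i + 1)).const_mul (p (2 * i + 1))
    have tO : Tendsto (fun n => ∑ i ∈ range K, p (2 * i) * (a (n - 1 - 2 * i) / a (n - 1)))
        atTop (𝓝 O) := by
      simpa using tendsto_finsetSum (range K) fun i _ =>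
        ((heven i).comp (tendsto_sub_atTop_nat 1)).const_mul (p (2 * i))
    have t := (tE.const_sub 1).div tO hOpos.ne'
    filter_upwards [t.eventually_lt_const hlt, tO.eventually_const_lt hOpos, ha,
      (tendsto_sub_atTop_nat 1).eventually ha, hle (2 * K)] with n hn hOn han han1 hlen
    refine lt_of_le_of_lt ?_ hn
    simp only [Pi.div_apply]
    rw [le_div_iff₀ hOn, le_sub_iff_add_le, mul_sum, ← sum_add_distrib]
    have hsplit' : ∀ K, ∑ j ∈ range (2 * K), p j * a (n - (j + 1))
        = ∑ i ∈ range K, (p (2 * i) * a (n - (2 * i + 1))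
          + p (2 * i + 1) * a (n - (2 * i + 1 + 1))) := by
      intro K
      induction K with
      | zero => simp
      | succ K ih =>
        rw [mul_add, mul_one, sum_range_succ, sum_range_succ, ih, sum_range_succ]
        ring
    rw [hsplit'] at hlen
    have : ∑ i ∈ range K, (a (n - 1) / a n * (p (2 * i) * (a (n - 1 - 2 * i) / a (n - 1)))
        + p (2 * i + 1) * (a (n - 2 * (i + 1)) / a n))
        = (∑ i ∈ range K, (p (2 * i) * a (n - (2 * i + 1))
          + p (2 * i + 1) * a (n - (2 * i + 1 + 1)))) / a n := by
      rw [sum_div]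
      refine sum_congr rfl fun i _ => ?_
      rw [show n - 1 - 2 * i = n - (2 * i + 1) by omega,
        show n - 2 * (i + 1) = n - (2 * i + 1 + 1) by omega]
      field_simp
    rw [this]
    exact (div_le_one han).2 hlen
  have h1 : Tendsto (fun n => a (n - 1) / a n) atTop (𝓝 1) := by
    rw [tendsto_order]
    refine ⟨fun c hc => ?_, hupper⟩
    rcases le_or_gt c 0 with hc0 | hc0
    · filter_upwards [ha, (tendsto_sub_atTop_nat 1).eventually ha] with n h h'
      exact hc0.trans_lt (div_pos h' h)
    · have hup := (tendsto_add_atTop_nat 1).eventually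
        (hupper ((1 + c) / 2 / c) (by rw [lt_div_iff₀ hc0]; linarith))
      have hprod := (tendsto_add_atTop_nat 1).eventually
        (h2.eventually_const_lt (show (1 + c) / 2 < 1 by linarith))
      filter_upwards [hup, hprod, ha, (tendsto_sub_atTop_nat 1).eventually ha,
        (tendsto_add_atTop_nat 1).eventually ha] with n h3 h4 h5 h6 h7
      rw [show n + 1 - 2 = n - 1 by omega] at h4
      rw [show n + 1 - 1 = n by omega] at h3
      have hmul : a (n - 1) / a n * (a n / a (n + 1)) = a (n - 1) / a (n + 1) :=
        div_mul_div_cancel₀ h5.ne'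
      have hx : 0 < a (n - 1) / a n := div_pos h6 h5
      rw [← hmul] at h4
      have h8 := h4.trans (mul_lt_mul_of_pos_left h3 hx)
      have hc2 : 0 < (1 + c) / 2 := by linarith
      rw [← mul_div_assoc, lt_div_iff₀ hc0, mul_comm, mul_lt_mul_iff_left₀ hc2] at h8
      exact h8
  induction k with
  | zero => exact h0
  | succ k ih => exact hcomp 1 k h1 ih

theorem pi1_sub {d : ℕ} (x y : Fin d → ℤ) : pi1 (x - y) = pi1 x - pi1 y := by
  unfold pi1
  split <;> simp

theorem pi1_add {d : ℕ} (x y : Fin d → ℤ) : pi1 (x + y) = pi1 x + pi1 y := by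
  unfold pi1
  split <;> simp

theorem pi1_zero {d : ℕ} : pi1 (0 : Fin d → ℤ) = 0 := by
  unfold pi1
  split <;> simp

theorem finite_Upsilon (d n : ℕ) : (Upsilon d n).Finite := by
  refine (Set.finite_Icc (fun _ _ => -(n : ℤ)) (fun _ _ => (n : ℤ))).subset ?_
  rintro ω ⟨⟨hstep, -⟩, h0, -⟩
  have key : ∀ (i : ℕ) (hi : i < n + 1) (c : Fin d), |ω ⟨i, hi⟩ c| ≤ i := by
    intro i
    induction i with
    | zero =>
      intro hi c
      have : ω ⟨0, hi⟩ c = 0 := congrFun h0 c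
      rw [this]
      simp
    | succ i ih =>
      intro hi c
      have h1 := hstep ⟨i, by omega⟩
      have h2 : |ω ⟨i + 1, hi⟩ c - ω ⟨i, by omega⟩ c| ≤ 1 := by
        rw [← h1]
        exact Finset.single_le_sum
          (f := fun c => |ω ⟨i + 1, hi⟩ c - ω ⟨i, by omega⟩ c|)
          (fun _ _ => abs_nonneg _) (Finset.mem_univ c)
      have h3 := ih (by omega) c
      rw [abs_le] at *
      push_cast
      constructor <;> linarith
  constructor
  · intro i c
    have h := (abs_le.1 (key i i.2 c)).1
    have := i.2
    simp only [Fin.eta] at h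
    show -(n : ℤ) ≤ ω i c
    omega
  · intro i c
    have h := (abs_le.1 (key i i.2 c)).2
    have := i.2
    simp only [Fin.eta] at h
    show ω i c ≤ n
    omega

theorem lambdaCount_one_pos {d : ℕ} (hd : 0 < d) : 0 < lambdaCount d 1 := by
  have hfin : {ω : Fin (1 + 1) → Fin d → ℤ | IsIrrBridge d 1 ω}.Finite :=
    (finite_Upsilon d 1).subset fun ω h => h.1.1
  refine (Set.ncard_pos hfin).2 ⟨![0, Pi.single ⟨0, hd⟩ 1], ?_⟩
  have h1 : pi1 (Pi.single ⟨0, hd⟩ 1 : Fin d → ℤ) = 1 := by simp [pi1, hd]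
  refine ⟨⟨⟨⟨?_, ?_⟩, rfl, ?_⟩, ?_⟩, ?_⟩
  · intro i
    fin_cases i
    simp [Pi.single_apply, apply_ite abs]
  · intro i j hij
    have : (0 : Fin d → ℤ) ≠ Pi.single ⟨0, hd⟩ 1 := fun h => by
      have := congrArg pi1 h
      rw [h1, pi1_zero] at this
      exact absurd this (by norm_num)
    fin_cases i <;> fin_cases j <;> simp_all
  · intro j hj
    fin_cases j
    · simp at hj
    · simp [h1]
  · intro j
    fin_cases j <;> simp [h1, pi1_zero, Fin.last]
  · rintro j ⟨h, h', -⟩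
    omega

/-- The concatenation of a `k`-step walk with a translate of an `m`-step walk. -/
def walkConcat {d k m : ℕ} (η : Fin (k + 1) → Fin d → ℤ) (ξ : Fin (m + 1) → Fin d → ℤ) :
    Fin (m + k + 1) → Fin d → ℤ := fun i =>
  if h : i.val ≤ k then η ⟨i, by omega⟩ else η (Fin.last k) + ξ ⟨i - k, by omega⟩

theorem walkConcat_left {d k m : ℕ} (η : Fin (k + 1) → Fin d → ℤ) (ξ : Fin (m + 1) → Fin d → ℤ)
    (i : Fin (m + k + 1)) (h : i.val ≤ k) : walkConcat η ξ i = η ⟨i, by omega⟩ := by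
  simp [walkConcat, h]

theorem walkConcat_right {d k m : ℕ} (η : Fin (k + 1) → Fin d → ℤ) (ξ : Fin (m + 1) → Fin d → ℤ)
    (hξ : ξ 0 = 0) (i : Fin (m + k + 1)) (h : k ≤ i.val) :
    walkConcat η ξ i = η (Fin.last k) + ξ ⟨i - k, by omega⟩ := by
  unfold walkConcat
  split
  · have hi : i.val = k := by omega
    have : (⟨i - k, by omega⟩ : Fin (m + 1)) = 0 := Fin.ext (by simp [hi])
    rw [this, hξ, add_zero]
    congr 1
    exact Fin.ext hi
  · rfl

theorem walkConcat_mem_leastRenewal {d k m : ℕ} (hk : 1 ≤ k) (hm : 1 ≤ m)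
    {η : Fin (k + 1) → Fin d → ℤ} {ξ : Fin (m + 1) → Fin d → ℤ}
    (hη : IsIrrBridge d k η) (hξ : ξ ∈ Upsilon d m) :
    walkConcat η ξ ∈ Upsilon d (m + k) ∧ LeastRenewal (walkConcat η ξ) k := by
  obtain ⟨⟨⟨⟨hηs, hηi⟩, hη0, hηp⟩, hηl⟩, hηr⟩ := hη
  obtain ⟨⟨hξs, hξi⟩, hξ0, hξp⟩ := hξ
  have hR := walkConcat_right η ξ hξ0
  have hL := walkConcat_left η ξ
  have hle : ∀ i : Fin (m + k + 1), i.val ≤ k → pi1 (walkConcat η ξ i) ≤ pi1 (η (Fin.last k)) := by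
    intro i hi
    rw [hL i hi]
    exact hηl _
  have hgt : ∀ i : Fin (m + k + 1), k < i.val → pi1 (η (Fin.last k)) < pi1 (walkConcat η ξ i) := by
    intro i hi
    rw [hR i hi.le, pi1_add]
    have := hξp ⟨i - k, by omega⟩ (by simp; omega)
    omega
  have hlast : 0 < pi1 (η (Fin.last k)) := hηp _ (by simpa using hk)
  refine ⟨⟨⟨?_, ?_⟩, ?_, ?_⟩, ⟨hk, by omega, ?_⟩, ?_⟩
  · intro i
    rcases lt_or_ge i.val k with h | h
    · rw [hL _ (by simp; omega), hL _ (by simp; omega)]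
      exact hηs ⟨i, h⟩
    · rw [hR _ (by simp; omega), hR _ (by simp; omega)]
      rw [← hξs ⟨i - k, by omega⟩]
      have e : (⟨i.succ.val - k, by omega⟩ : Fin (m + 1))
          = (⟨i - k, by omega⟩ : Fin m).succ := Fin.ext (by simp; omega)
      rw [e]
      refine Finset.sum_congr rfl fun c _ => ?_
      simp only [Pi.add_apply, add_sub_add_left_eq_sub]
      rfl
  · intro i j hij
    rcases le_or_gt i.val k with hi | hi <;> rcases le_or_gt j.val k with hj | hj
    · rw [hL i hi, hL j hj] at hij
      have := hηi hij
      simpa [Fin.ext_iff] using this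
    · have h1 := hle i hi
      have h2 := hgt j hj
      rw [hij] at h1
      omega
    · have h1 := hle j hj
      have h2 := hgt i hi
      rw [hij] at h2
      omega
    · rw [hR i hi.le, hR j hj.le] at hij
      have := hξi (add_left_cancel hij)
      simp only [Fin.ext_iff] at this
      exact Fin.ext (by omega)
  · rw [hL _ (by simp)]
    exact hη0
  · intro j hj
    rcases le_or_gt j.val k with h | h
    · rw [hL j h]
      exact hηp _ hj
    · exact hlast.trans (hgt j h)
  · intro i j hi hj
    rw [hL ⟨k, _⟩ le_rfl]
    exact ⟨hle i hi, hgt j hj⟩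
  · rintro j hjk ⟨hj1, hj, h⟩
    refine hηr j ⟨hj1, hjk, fun a b ha hb => ?_⟩
    have := h ⟨a, by omega⟩ ⟨b, by omega⟩ ha hb
    rwa [hL _ (by simp; omega), hL _ (by simp; omega), hL _ (by simp; omega)] at this

theorem restrict_isIrrBridge {d k m : ℕ} {ω : Fin (m + k + 1) → Fin d → ℤ}
    (hω : ω ∈ Upsilon d (m + k)) (hr : LeastRenewal ω k) :
    IsIrrBridge d k fun i => ω ⟨i, by omega⟩ := by
  obtain ⟨⟨hs, hi⟩, h0, hp⟩ := hω
  obtain ⟨⟨hk, hkm, hren⟩, hmin⟩ := hr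
  refine ⟨⟨⟨⟨?_, ?_⟩, h0, fun j hj => hp _ hj⟩, ?_⟩, ?_⟩
  · intro i
    exact hs ⟨i, by omega⟩
  · intro i j hij
    have := hi hij
    simpa [Fin.ext_iff] using this
  · intro j
    exact (hren ⟨j, by omega⟩ (Fin.last _) (by simp; omega) (by simp; omega)).1
  · rintro j ⟨hj, hjk, h⟩
    refine hmin j hjk ⟨hj, by omega, fun a b ha hb => ?_⟩
    refine ⟨(h ⟨a, by omega⟩ (Fin.last _) ha hjk).1, ?_⟩
    rcases le_or_gt b.val k with hbk | hbk
    · exact (h ⟨a, by omega⟩ ⟨b, by omega⟩ ha hb).2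
    · exact (h ⟨a, by omega⟩ (Fin.last _) ha hjk).2.trans (hren ⟨k, by omega⟩ b le_rfl hbk).2

theorem shift_mem_Upsilon {d k m : ℕ} {ω : Fin (m + k + 1) → Fin d → ℤ}
    (hω : ω ∈ Upsilon d (m + k)) (hr : HasRenewalAt ω k) :
    (fun i : Fin (m + 1) => ω ⟨i + k, by omega⟩ - ω ⟨k, by omega⟩) ∈ Upsilon d m := by
  obtain ⟨⟨hs, hi⟩, h0, hp⟩ := hω
  obtain ⟨hk, hkm, hren⟩ := hr
  refine ⟨⟨?_, ?_⟩, ?_, ?_⟩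
  · intro i
    rw [← hs ⟨i + k, by omega⟩]
    refine Finset.sum_congr rfl fun c _ => ?_
    have e : (⟨i.succ.val + k, by omega⟩ : Fin (m + k + 1))
        = (⟨i + k, by omega⟩ : Fin (m + k)).succ := Fin.ext (by simp; omega)
    simp only [Pi.sub_apply, sub_sub_sub_cancel_right, e]
    rfl
  · intro i j hij
    have := hi (sub_left_injective hij)
    simpa [Fin.ext_iff] using this
  · simp
  · intro j hj
    rw [pi1_sub, sub_pos]
    exact (hren ⟨k, by omega⟩ ⟨j + k, by omega⟩ le_rfl (by simp only; omega)).2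

/-- Cutting a walk at its least renewal time gives an irreducible bridge and a walk in the same
half-space. -/
theorem ncard_leastRenewal (d : ℕ) {k m : ℕ} (hk : 1 ≤ k) (hm : 1 ≤ m) :
    Set.ncard {ω : Fin (m + k + 1) → Fin d → ℤ | ω ∈ Upsilon d (m + k) ∧ LeastRenewal ω k}
      = lambdaCount d k * upsilonCount d m := by
  rw [lambdaCount, upsilonCount, ← Set.ncard_prod]
  symm
  refine Set.ncard_congr (fun q _ => walkConcat q.1 q.2) ?_ ?_ ?_
  · rintro ⟨η, ξ⟩ ⟨hη, hξ⟩
    exact walkConcat_mem_leastRenewal hk hm hη hξ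
  · rintro ⟨η, ξ⟩ ⟨η', ξ'⟩ ⟨hη, hξ⟩ ⟨hη', hξ'⟩ heq
    simp only at heq hξ hξ'
    have h1 : η = η' := by
      funext i
      have := congrFun heq ⟨i, by omega⟩
      rwa [walkConcat_left _ _ _ (by simp; omega), walkConcat_left _ _ _ (by simp; omega)] at this
    subst h1
    have h2 : ξ = ξ' := by
      funext i
      have := congrFun heq ⟨i + k, by omega⟩
      rw [walkConcat_right _ _ hξ.2.1 _ (by simp), walkConcat_right _ _ hξ'.2.1 _ (by simp)] at this
      simpa using this
    rw [h2]
  · rintro ω ⟨hω, hr⟩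
    have hξ := shift_mem_Upsilon hω hr.1
    refine ⟨(fun i => ω ⟨i, by omega⟩, fun i => ω ⟨i + k, by omega⟩ - ω ⟨k, by omega⟩),
      ⟨restrict_isIrrBridge hω hr, hξ⟩, ?_⟩
    funext i
    rcases le_or_gt i.val k with hi | hi
    · exact walkConcat_left _ _ _ hi
    · refine (walkConcat_right _ _ hξ.2.1 _ hi.le).trans ?_
      simp only [Nat.sub_add_cancel hi.le, Fin.val_last, Fin.eta, add_sub_cancel]

theorem ncard_leastRenewal_of_lt (d : ℕ) {k n : ℕ} (hk : 1 ≤ k) (hn : k < n) :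
    Set.ncard {ω : Fin (n + 1) → Fin d → ℤ | ω ∈ Upsilon d n ∧ LeastRenewal ω k}
      = lambdaCount d k * upsilonCount d (n - k) := by
  obtain ⟨m, rfl⟩ := Nat.exists_eq_add_of_le' hn.le
  rw [ncard_leastRenewal d hk (by omega), Nat.add_sub_cancel]

theorem sum_lambdaCount_mul_upsilonCount_le (d : ℕ) {J n : ℕ} (hn : J < n) :
    ∑ j ∈ Finset.range J, lambdaCount d (j + 1) * upsilonCount d (n - (j + 1))
      ≤ upsilonCount d n := by
  classical
  set A : ℕ → Set (Fin (n + 1) → Fin d → ℤ) := fun j =>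
    {ω | ω ∈ Upsilon d n ∧ LeastRenewal ω (j + 1)} with hA
  have hfin : ∀ j, (A j).Finite := fun j => (finite_Upsilon d n).subset fun ω h => h.1
  have hsum : ∑ j ∈ Finset.range J, lambdaCount d (j + 1) * upsilonCount d (n - (j + 1))
      = ∑ j ∈ Finset.range J, (hfin j).toFinset.card := by
    refine Finset.sum_congr rfl fun j hj => ?_
    rw [Finset.mem_range] at hj
    rw [← ncard_leastRenewal_of_lt d (by omega) (by omega), ← Set.ncard_eq_toFinset_card _ (hfin j)]
  rw [hsum, ← Finset.card_biUnion, upsilonCount,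
    Set.ncard_eq_toFinset_card _ (finite_Upsilon d n)]
  · refine Finset.card_le_card fun ω hω => ?_
    simp only [Finset.mem_biUnion, Set.Finite.mem_toFinset] at hω ⊢
    obtain ⟨j, -, h⟩ := hω
    exact h.1
  · intro i _ j _ hij
    rw [Function.onFun_apply, Finset.disjoint_left]
    intro ω hi hj
    simp only [Set.Finite.mem_toFinset, hA, Set.mem_ofPred_eq] at hi hj
    rcases lt_or_gt_of_ne hij with h | h
    · exact hj.2.2 _ (by omega) hi.2.1
    · exact hi.2.2 _ (by omega) hj.2.1

/-- Kesten's relations imply that, under the uniform measure on `Υ_n`, the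
probability that the least renewal time equals `k` converges to `λ_k β^{−k}`:
for every `k ≥ 1`, `#{ω ∈ Υ_n : s(ω) = k}/υ_n → λ_k β^{−k}` as `n → ∞`. -/
theorem tendsto_leastRenewal_prob (d : ℕ) (hd : 2 ≤ d) (β : ℝ) (hβ : 1 < β)
    (h1 : ∑' j : ℕ, (lambdaCount d (j + 1) : ℝ) / β ^ (j + 1) = 1)
    (h2 : Filter.Tendsto (fun n : ℕ => (upsilonCount d (n + 2) : ℝ) / (upsilonCount d n : ℝ))
      Filter.atTop (nhds (β ^ 2)))
    (k : ℕ) (hk : 1 ≤ k) :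
    Filter.Tendsto
      (fun n : ℕ =>
        (Set.ncard {ω : Fin (n + 1) → Fin d → ℤ | ω ∈ Upsilon d n ∧ LeastRenewal ω k} : ℝ)
          / (upsilonCount d n : ℝ))
      Filter.atTop (nhds ((lambdaCount d k : ℝ) / β ^ k)) := by
  set u : ℕ → ℝ := fun n => upsilonCount d n with hu
  have hβ0 : 0 < β := by linarith
  have hupos : ∀ᶠ n in Filter.atTop, 0 < u n := by
    filter_upwards [h2.eventually_const_lt (pow_pos hβ0 2)] with n hn
    refine lt_of_le_of_ne (Nat.cast_nonneg _) fun h => ?_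
    have h' : (upsilonCount d n : ℝ) = 0 := h.symm
    simp [h'] at hn
  have hratio : ∀ j n : ℕ, j ≤ n →
      u (n - j) / β ^ (n - j) / (u n / β ^ n) = u (n - j) / u n * β ^ j := by
    intro j n hjn
    obtain ⟨m, rfl⟩ := Nat.exists_eq_add_of_le' hjn
    rw [Nat.add_sub_cancel, pow_add]
    field_simp
  have hlim := tendsto_sub_div_of_renewal_le (a := fun n => u n / β ^ n)
    (p := fun j => (lambdaCount d (j + 1) : ℝ) / β ^ (j + 1))
    (hupos.mono fun n hn => div_pos hn (pow_pos hβ0 n)) ?_ (fun j => by positivity)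
    (by have := lambdaCount_one_pos (show 0 < d by omega); positivity) ?_ ?_ k
  · have h := hlim.const_mul ((lambdaCount d k : ℝ) / β ^ k)
    rw [mul_one] at h
    refine h.congr' ?_
    filter_upwards [Filter.eventually_gt_atTop k] with n hn
    rw [hratio k n hn.le, ncard_leastRenewal_of_lt d hk hn]
    push_cast
    field_simp
    rfl
  · rw [← Filter.tendsto_add_atTop_iff_nat 2]
    have h := (h2.inv₀ (pow_pos hβ0 2).ne').mul_const (β ^ 2)
    rw [inv_mul_cancel₀ (pow_pos hβ0 2).ne'] at h
    refine h.congr fun n => ?_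
    rw [hratio 2 (n + 2) (by omega), Nat.add_sub_cancel, inv_div]
  · rw [← h1]
    refine Summable.hasSum ?_
    by_contra hns
    rw [tsum_eq_zero_of_not_summable hns] at h1
    exact zero_ne_one h1
  · intro J
    filter_upwards [Filter.eventually_gt_atTop J] with n hn
    have h : (∑ j ∈ Finset.range J, (lambdaCount d (j + 1) : ℝ) * u (n - (j + 1))) ≤ u n := by
      simp only [hu]
      exact_mod_cast sum_lambdaCount_mul_upsilonCount_le d hn
    rw [le_div_iff₀ (pow_pos hβ0 n), Finset.sum_mul]
    refine le_trans (le_of_eq (Finset.sum_congr rfl fun j hj => ?_)) h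
    rw [Finset.mem_range] at hj
    have : β ^ n = β ^ (n - (j + 1)) * β ^ (j + 1) := by
      rw [← pow_add, Nat.sub_add_cancel (by omega)]
    rw [this]
    field_simp
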